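/- Let G be a finite simple bipartite graph, let t be a vertex of G that is saturated by every maximum matching of G, and let M be a maximum matching of G containing an edge tw. Then the UIF position obtained by the regular move along tw — namely, the induced subgraph of G on the vertices other than t, with the token on w — is not an N-position. (Hence the player to move in (G, t) wins by moving regularly along an edge of a maximum matching.) -/

import Mathlib

variable {V : Type*}

/-- A matching of `G`: a set of edges of `G`, no two of which share an endpoint. -/
def IsMatching (G : SimpleGraph V) (M : Set (Sym2 V)) : Prop :=
  M ⊆ G.edgeSet ∧ M.Pairwise fun e f => ∀ v : V, v ∈ e → v ∉ f

/-- A maximum matching of `G`: a matching of maximum cardinality among all matchings of `G`. -/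
def IsMaxMatching (G : SimpleGraph V) (M : Set (Sym2 V)) : Prop :=
  IsMatching G M ∧ ∀ N : Set (Sym2 V), IsMatching G N → N.ncard ≤ M.ncard

/-- `M` saturates the vertex `v`: `v` is an endpoint of some edge of `M`. -/
def Saturates (M : Set (Sym2 V)) (v : V) : Prop := ∃ e ∈ M, v ∈ e

/-- N-positions of undirected impartial Geography with free deletion (UIF), played on the
induced subgraph of `G` on the vertex set `A` with the token on `t`: a move consists of
choosing `w ∈ A` adjacent to the token vertex `t` and `u ∈ A` adjacent to `w` (possibly
`u = t`), moving the token to `w` and deleting `u`.  A position is an N-position iff some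
legal move leads to a position that is not an N-position. -/
def uifN [DecidableEq V] (G : SimpleGraph V) : Finset V → V → Prop
  | A, t =>
    ∃ w ∈ A, ∃ u, ∃ _ : u ∈ A, G.Adj t w ∧ G.Adj w u ∧ ¬ uifN G (A.erase u) w
  termination_by A _ => A.card
  decreasing_by exact Finset.card_erase_lt_of_mem ‹u ∈ A›

/-- Matchings of the subgraph induced on `A`. -/
def Mt (G : SimpleGraph V) (A : Finset V) (N : Set (Sym2 V)) : Prop :=
  IsMatching G N ∧ ∀ e ∈ N, ∀ v ∈ e, v ∈ A

/-- Maximum matchings of the subgraph induced on `A`. -/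
def Mx (G : SimpleGraph V) (A : Finset V) (N : Set (Sym2 V)) : Prop :=
  Mt G A N ∧ ∀ K : Set (Sym2 V), Mt G A K → K.ncard ≤ N.ncard

theorem Mt.uniq {G : SimpleGraph V} {A : Finset V} {N : Set (Sym2 V)} (h : Mt G A N)
    {e f : Sym2 V} (he : e ∈ N) (hf : f ∈ N) {v : V} (hve : v ∈ e) (hvf : v ∈ f) : e = f := by
  by_contra hne
  exact h.1.2 he hf hne v hve hvf

theorem Mt.subset {G : SimpleGraph V} {A : Finset V} {N K : Set (Sym2 V)} (h : Mt G A N)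
    (hK : K ⊆ N) : Mt G A K :=
  ⟨⟨hK.trans h.1.1, h.1.2.mono hK⟩, fun e he => h.2 e (hK he)⟩

theorem Mt.mono {G : SimpleGraph V} {A B : Finset V} {N : Set (Sym2 V)} (h : Mt G A N)
    (hAB : A ⊆ B) : Mt G B N :=
  ⟨h.1, fun e he v hv => hAB (h.2 e he v hv)⟩

theorem Mt.erase [DecidableEq V] {G : SimpleGraph V} {A : Finset V} {N : Set (Sym2 V)}
    (h : Mt G A N) {t : V} (ht : ¬ Saturates N t) : Mt G (A.erase t) N := by
  refine ⟨h.1, fun e he v hv => Finset.mem_erase.2 ⟨?_, h.2 e he v hv⟩⟩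
  rintro rfl
  exact ht ⟨e, he, hv⟩

theorem Mt.insert_edge {G : SimpleGraph V} {A : Finset V} {N : Set (Sym2 V)}
    (h : Mt G A N) {a b : V} (ha : a ∈ A) (hb : b ∈ A) (hab : G.Adj a b)
    (hNa : ¬ Saturates N a) (hNb : ¬ Saturates N b) : Mt G A (insert s(a, b) N) := by
  have key : ∀ f ∈ N, ∀ v : V, v ∈ s(a, b) → v ∉ f := by
    intro f hf v hv hvf
    rcases Sym2.mem_iff.1 hv with rfl | rfl
    · exact hNa ⟨f, hf, hvf⟩
    · exact hNb ⟨f, hf, hvf⟩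
  refine ⟨⟨?_, ?_⟩, ?_⟩
  · rintro e (rfl | he)
    · exact hab
    · exact h.1.1 he
  · rintro e (rfl | he) f (rfl | hf) hne v hve hvf
    · exact hne rfl
    · exact key f hf v hve hvf
    · exact key e he v hvf hve
    · exact h.1.2 he hf hne v hve hvf
  · rintro e (rfl | he) v hv
    · rcases Sym2.mem_iff.1 hv with rfl | rfl <;> assumption
    · exact h.2 e he v hv

theorem ncard_insert_edge [Finite V] {N : Set (Sym2 V)} {a b : V} (hNa : ¬ Saturates N a) :
    (insert s(a, b) N).ncard = N.ncard + 1 :=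
  Set.ncard_insert_of_notMem (fun h => hNa ⟨_, h, Sym2.mem_mk_left a b⟩) (Set.toFinite _)

theorem ncard_remove_edge [Finite V] {N : Set (Sym2 V)} {e : Sym2 V} (h : e ∈ N) :
    (N \ {e}).ncard + 1 = N.ncard :=
  Set.ncard_sdiff_singleton_add_one h (Set.toFinite _)

theorem Mt.not_sat_remove {G : SimpleGraph V} {A : Finset V} {N : Set (Sym2 V)}
    (h : Mt G A N) {e : Sym2 V} (he : e ∈ N) {v : V} (hv : v ∈ e) :
    ¬ Saturates (N \ {e}) v := by
  rintro ⟨f, ⟨hf, hfe⟩, hvf⟩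
  exact hfe (h.uniq hf he hvf hv)

theorem not_sat_subset {N K : Set (Sym2 V)} {v : V} (h : ¬ Saturates N v) (hK : K ⊆ N) :
    ¬ Saturates K v := fun ⟨e, he, hv⟩ => h ⟨e, hK he, hv⟩

theorem not_sat_insert {N : Set (Sym2 V)} {v a b : V} (h : ¬ Saturates N v) (ha : v ≠ a)
    (hb : v ≠ b) : ¬ Saturates (insert s(a, b) N) v := by
  rintro ⟨e, (rfl | he), hv⟩
  · rcases Sym2.mem_iff.1 hv with h | h
    · exact ha h
    · exact hb h
  · exact h ⟨e, he, hv⟩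

theorem Mt.adj {G : SimpleGraph V} {A : Finset V} {N : Set (Sym2 V)}
    (h : Mt G A N) {a b : V} (hab : s(a, b) ∈ N) : G.Adj a b := h.1.1 hab

/-- Exchange the edge `ab` for `wa`, where `w` is unsaturated. -/
theorem Mx.swap [Finite V] {G : SimpleGraph V} {A : Finset V} {N : Set (Sym2 V)}
    (h : Mx G A N) {a b w : V} (hab : s(a, b) ∈ N) (hw : w ∈ A) (hwa : G.Adj w a)
    (hNw : ¬ Saturates N w) :
    Mx G A (insert s(w, a) (N \ {s(a, b)})) ∧
      ¬ Saturates (insert s(w, a) (N \ {s(a, b)})) b := by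
  have hw' : ¬ Saturates (N \ {s(a, b)}) w := not_sat_subset hNw Set.sdiff_subset
  refine ⟨⟨?_, ?_⟩, ?_⟩
  · exact (h.1.subset Set.sdiff_subset).insert_edge hw (h.1.2 _ hab a (Sym2.mem_mk_left a b)) hwa
      hw' (h.1.not_sat_remove hab (Sym2.mem_mk_left a b))
  · intro K hK
    rw [ncard_insert_edge hw', ncard_remove_edge hab]
    exact h.2 K hK
  · refine not_sat_insert (h.1.not_sat_remove hab (Sym2.mem_mk_right a b)) ?_ ?_
    · rintro rfl
      exact hNw ⟨_, hab, Sym2.mem_mk_right _ _⟩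
    · exact (h.1.adj hab).ne'

theorem exists_Mx [Finite V] (G : SimpleGraph V) (A : Finset V) : ∃ N, Mx G A N := by
  have hne : {N : Set (Sym2 V) | Mt G A N}.Nonempty :=
    ⟨∅, ⟨⟨Set.empty_subset _, Set.pairwise_empty _⟩, fun e he => absurd he (Set.notMem_empty e)⟩⟩
  obtain ⟨N, hN, hmax⟩ := Set.exists_max_image _ Set.ncard (Set.toFinite _) hne
  exact ⟨N, hN, fun K hK => hmax K hK⟩

/-- Alternating path lemma. -/
theorem alternate [Finite V] {G : SimpleGraph V} {A : Finset V} (c : G.Coloring (Fin 2))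
    {u x : V} (L : Set (Sym2 V)) (hL : Mx G A L) (hxu : s(x, u) ∈ L) :
    ∀ (n : ℕ) (N : Set (Sym2 V)) (w : V), (L \ N).ncard ≤ n → Mx G A N → ¬ Saturates N w →
      w ∈ A → c w = c u →
      (∃ K, Mx G A K ∧ ¬ Saturates K u) ∨
      (∃ K, Mx G A K ∧ ¬ Saturates K w ∧ s(x, u) ∈ K ∧ L ∩ N ⊆ K) := by
  intro n
  induction n with
  | zero =>
    intro N w hn hN hNw hw hc
    right
    have hLN : L ⊆ N := by
      rw [← Set.sdiff_eq_empty, ← Set.ncard_eq_zero (Set.toFinite _)]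
      omega
    exact ⟨L, hL, not_sat_subset hNw hLN, hxu, Set.inter_subset_left⟩
  | succ n ih =>
    intro N w hn hN hNw hw hc
    by_cases hLw : Saturates L w
    swap
    · exact Or.inr ⟨L, hL, hLw, hxu, Set.inter_subset_left⟩
    obtain ⟨e, he, hwe⟩ := hLw
    obtain ⟨a, rfl⟩ := hwe
    have hwa : G.Adj w a := hL.1.adj he
    have haA : a ∈ A := hL.1.2 _ he a (Sym2.mem_mk_right w a)
    by_cases hwu : w = u
    · subst hwu
      exact Or.inl ⟨N, hN, hNw⟩
    have hcx : c x ≠ c u := c.valid (hL.1.adj hxu)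
    have hwx : w ≠ x := by
      rintro rfl
      exact hcx hc
    have hne : s(x, u) ≠ s(w, a) := by
      intro h
      have : w ∈ s(x, u) := h ▸ Sym2.mem_mk_left w a
      rcases Sym2.mem_iff.1 this with h | h
      · exact hwx h
      · exact hwu h
    have hNa : Saturates N a := by
      by_contra hNa
      have := hN.2 _ (hN.1.insert_edge hw haA hwa hNw hNa)
      rw [ncard_insert_edge hNw] at this
      omega
    obtain ⟨e', he', hae'⟩ := hNa
    obtain ⟨b, rfl⟩ := hae'
    have hab : G.Adj a b := hN.1.adj he'
    have hbw : b ≠ w := by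
      rintro rfl
      exact hNw ⟨_, he', Sym2.mem_mk_right _ _⟩
    have hbA : b ∈ A := hN.1.2 _ he' b (Sym2.mem_mk_right a b)
    have hcb : c b = c u := by
      have h1 : c w ≠ c a := c.valid hwa
      have h2 : c a ≠ c b := c.valid hab
      rw [← hc]
      omega
    have habL : s(a, b) ∉ L := by
      intro h
      have h1 := hL.1.uniq h he (Sym2.mem_mk_left a b) (Sym2.mem_mk_right w a)
      have : b ∈ s(w, a) := h1 ▸ Sym2.mem_mk_right a b
      rcases Sym2.mem_iff.1 this with h | h
      · exact hbw h
      · exact hab.ne' h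
    have hwaN : s(w, a) ∉ N := fun h => hNw ⟨_, h, Sym2.mem_mk_left w a⟩
    obtain ⟨hN1, hN1b⟩ := hN.swap he' hw hwa hNw
    have hsub : L ∩ N ⊆ L ∩ insert s(w, a) (N \ {s(a, b)}) := by
      rintro f ⟨hfL, hfN⟩
      refine ⟨hfL, Or.inr ⟨hfN, ?_⟩⟩
      rintro rfl
      exact habL hfL
    have hlt : (L \ insert s(w, a) (N \ {s(a, b)})).ncard < (L \ N).ncard := by
      apply Set.ncard_lt_ncard _ (Set.toFinite _)
      refine ⟨fun f hf => ⟨hf.1, fun hfN => hf.2 (hsub ⟨hf.1, hfN⟩).2⟩, fun h => ?_⟩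
      exact (h ⟨he, hwaN⟩).2 (Set.mem_insert _ _)
    rcases ih _ b (by omega) hN1 hN1b hbA hcb with h | ⟨K, hK, hKb, hKxu, hKs⟩
    · exact Or.inl h
    right
    have hwaK : s(a, w) ∈ K := by
      rw [Sym2.eq_swap]
      exact hKs ⟨he, Set.mem_insert _ _⟩
    obtain ⟨hK1, hK1w⟩ := hK.swap hwaK hbA hab.symm hKb
    refine ⟨_, hK1, hK1w, Or.inr ⟨hKxu, ?_⟩, ?_⟩
    · rw [Sym2.eq_swap (a := a)]
      exact hne
    · intro f hf
      refine Or.inr ⟨hKs (hsub hf), ?_⟩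
      rintro rfl
      rw [Sym2.eq_swap] at hf
      exact hwaN hf.2

/-- Regular move along a maximum matching. -/
theorem Mx.regular [Finite V] [DecidableEq V] {G : SimpleGraph V} {B : Finset V}
    {N : Set (Sym2 V)} (h : Mx G B N) {x y : V} (hxy : s(x, y) ∈ N)
    (hall : ∀ K, Mx G B K → Saturates K x) :
    Mx G (B.erase x) (N \ {s(x, y)}) ∧ ¬ Saturates (N \ {s(x, y)}) y := by
  refine ⟨⟨(h.1.subset Set.sdiff_subset).erase (h.1.not_sat_remove hxy (Sym2.mem_mk_left x y)), ?_⟩,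
    h.1.not_sat_remove hxy (Sym2.mem_mk_right x y)⟩
  intro K hK
  by_contra hlt
  have h1 := ncard_remove_edge hxy
  have hKB : Mx G B K := by
    refine ⟨hK.mono (Finset.erase_subset _ _), fun K' hK' => ?_⟩
    have := h.2 K' hK'
    omega
  obtain ⟨e, he, hxe⟩ := hall K hKB
  exact (Finset.notMem_erase x B) (hK.2 e he x hxe)

theorem key_sat [Finite V] [DecidableEq V] {G : SimpleGraph V} {A : Finset V}
    (c : G.Coloring (Fin 2)) {N : Set (Sym2 V)} (hN : Mx G A N) {w x u : V}
    (hNw : ¬ Saturates N w) (hw : w ∈ A) (hx : x ∈ A) (hu : u ∈ A) (hwx : G.Adj w x)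
    (hxu : G.Adj x u) (K : Set (Sym2 V)) (hK : Mx G (A.erase u) K) : Saturates K x := by
  by_contra hKx
  have hKu : ¬ Saturates K u := by
    rintro ⟨e, he, hue⟩
    exact Finset.notMem_erase u A (hK.1.2 e he u hue)
  have hL : Mt G A (insert s(x, u) K) :=
    (hK.1.mono (Finset.erase_subset _ _)).insert_edge hx hu hxu hKx hKu
  have hLc : (insert s(x, u) K).ncard = K.ncard + 1 := ncard_insert_edge hKx
  have hall : ∀ J, Mx G A J → Saturates J u := by
    intro J hJ
    by_contra hJu
    have h1 := hK.2 _ (hJ.1.erase hJu)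
    have h2 := hJ.2 _ hL
    omega
  have hLM : Mx G A (insert s(x, u) K) := by
    refine ⟨hL, fun J hJ => ?_⟩
    obtain ⟨e, he, hue⟩ := hall N hN
    have h1 := hK.2 _ ((hN.1.subset Set.sdiff_subset).erase (hN.1.not_sat_remove he hue))
    have h2 := ncard_remove_edge he
    have h3 := hN.2 J hJ
    omega
  have hc : c w = c u := by
    have h1 : c w ≠ c x := c.valid hwx
    have h2 : c x ≠ c u := c.valid hxu
    omega
  rcases alternate c _ hLM (Set.mem_insert _ _) _ N w le_rfl hN hNw hw hc with
    ⟨J, hJ, hJu⟩ | ⟨J, hJ, hJw, hJxu, -⟩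
  · exact hJu (hall J hJ)
  · obtain ⟨h1, h2⟩ := hJ.swap hJxu hw hwx hJw
    exact h2 (hall _ h1)

theorem not_uifN_of_Mx [Finite V] [DecidableEq V] {G : SimpleGraph V}
    (c : G.Coloring (Fin 2)) : ∀ (n : ℕ) (A : Finset V) (w : V) (N : Set (Sym2 V)),
      A.card ≤ n → Mx G A N → ¬ Saturates N w → w ∈ A → ¬ uifN G A w := by
  intro n
  induction n with
  | zero =>
    intro A w N hn _ _ hw
    have := Finset.card_pos.2 ⟨w, hw⟩
    omega
  | succ n ih =>
    intro A w N hn hN hNw hw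
    rw [uifN]
    rintro ⟨x, hx, u, hu, hwx, hxu, hlose⟩
    apply hlose
    have hall := key_sat c hN hNw hw hx hu hwx hxu
    obtain ⟨K, hK⟩ := exists_Mx G (A.erase u)
    obtain ⟨e, he, hxe⟩ := hall K hK
    obtain ⟨y, rfl⟩ := hxe
    have hxy : G.Adj x y := hK.1.adj he
    have hy : y ∈ A.erase u := hK.1.2 _ he y (Sym2.mem_mk_right x y)
    have hx' : x ∈ A.erase u := Finset.mem_erase.2 ⟨hxu.ne, hx⟩
    obtain ⟨h1, h2⟩ := hK.regular he hall
    rw [uifN]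
    refine ⟨y, hy, x, hx', hxy, hxy.symm, ih _ y _ ?_ h1 h2 (Finset.mem_erase.2 ⟨hxy.ne', hy⟩)⟩
    have h3 := Finset.card_erase_lt_of_mem hu
    have h4 := Finset.card_erase_lt_of_mem hx'
    omega

/-- If `G` is bipartite, `t` is saturated by every maximum matching of `G`, and `M` is a
maximum matching of `G` containing the edge `tw`, then the UIF position reached by the
regular move along `tw` (deleting `t`, token on `w`) is not an N-position. -/
theorem uif_regular_move_along_maxMatching_wins
    {V : Type*} [Fintype V] [DecidableEq V] (G : SimpleGraph V) (hG : G.Colorable 2)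
    (t w : V) (ht : ∀ M : Set (Sym2 V), IsMaxMatching G M → Saturates M t)
    (M : Set (Sym2 V)) (hM : IsMaxMatching G M) (htw : s(t, w) ∈ M) :
    ¬ uifN G (Finset.univ.erase t) w := by
  obtain ⟨c⟩ := hG
  have hiff : ∀ K : Set (Sym2 V), Mt G Finset.univ K ↔ IsMatching G K :=
    fun K => ⟨fun h => h.1, fun h => ⟨h, fun _ _ v _ => Finset.mem_univ v⟩⟩
  have hMx : ∀ K : Set (Sym2 V), Mx G Finset.univ K ↔ IsMaxMatching G K := by
    intro K
    simp only [Mx, IsMaxMatching, hiff]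
  have hM' := (hMx M).2 hM
  obtain ⟨h1, h2⟩ := hM'.regular htw (fun K hK => ht K ((hMx K).1 hK))
  exact not_uifN_of_Mx c _ _ w _ le_rfl h1 h2
    (Finset.mem_erase.2 ⟨(hM'.1.adj htw).ne', Finset.mem_univ w⟩)
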